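/- Let I be a closed unbounded set of ordinals and let B ⊆ I be countable and closed. Then clauses (b) and (c) of suitability hold for B if and only if every gap of B is capped by a member of B which is a limit point of I of uncountable cofinality; precisely, (b) and (c) hold if and only if for every β ∈ B, if there exists γ ∈ I ∖ B with γ < β and (γ, β) ∩ B = ∅, then β is a limit point of I of uncountable cofinality. -/

import Mathlib

open Set

noncomputable section

/-- `l` is a limit point of the set `S` of ordinals: `l > 0` and `sup (S ∩ l) = l`. -/
def IsLimitPoint (S : Set Ordinal) (l : Ordinal) : Prop :=
  0 < l ∧ sSup (S ∩ Iio l) = l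

/-- A set of ordinals is closed if it contains all of its limit points. -/
def IsClosedSet (S : Set Ordinal) : Prop :=
  ∀ l, IsLimitPoint S l → l ∈ S

/-- A set of ordinals is unbounded (in the class of all ordinals). -/
def IsUnboundedSet (S : Set Ordinal) : Prop :=
  ∀ a, ∃ b ∈ S, a < b

/-- `B` is a suitable subset of `I`: it is a countable closed subset of `I`, every member of `B`
which is a limit point of `I` of countable cofinality is a limit point of `B`, and `B` is closed
under immediate predecessors in `I`. -/
def Suitable (I B : Set Ordinal) : Prop :=
  B ⊆ I ∧ B.Countable ∧ IsClosedSet B ∧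
  (∀ β ∈ B, IsLimitPoint I β → β.cof ≤ Cardinal.aleph0 → IsLimitPoint B β) ∧
  (∀ β ∈ B, ∀ m, IsGreatest (I ∩ Iio β) m → m ∈ B)

/-!
Fix `β` above some member of the closed set `I`. Either `β` is a limit point of `I`, or
`sup (I ∩ β)` is the maximum of `I ∩ β`. In the first case `β` caps a gap of `B` exactly when it is
not a limit point of `B`; in the second, exactly when the maximum is missing from `B`. Hence, for
each `β` separately, clauses (b) and (c) say that `β` caps a gap only if it is a limit point of `I`
of uncountable cofinality.
-/

/-- `β` caps a gap of `B` in `I`: some member `γ < β` of `I` is missing from `B`, and so is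
everything strictly between `γ` and `β`. Membership of `β` itself in `B` is not part of the
definition. -/
def CapsGap (I B : Set Ordinal) (β : Ordinal) : Prop :=
  ∃ γ ∈ I \ B, γ < β ∧ Ioo γ β ∩ B = ∅

section CapsGap

variable {S T I B : Set Ordinal} {l m β : Ordinal}

theorem isLimitPoint_iff_exists_between :
    IsLimitPoint S l ↔ 0 < l ∧ ∀ a < l, ∃ s ∈ S, a < s ∧ s < l := by
  have hle : sSup (S ∩ Iio l) ≤ l := csSup_le' fun _ hx => hx.2.le
  have hbdd : BddAbove (S ∩ Iio l) := ⟨l, fun _ hx => hx.2.le⟩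
  refine and_congr_right fun _ => ?_
  rw [← hle.ge_iff_eq, ← forall_lt_iff_le]
  simp only [lt_csSup_iff' hbdd, mem_inter_iff, mem_Iio, and_assoc, and_comm (a := _ < l)]

theorem IsLimitPoint.exists_between (h : IsLimitPoint S l) {a : Ordinal} (ha : a < l) :
    ∃ s ∈ S, a < s ∧ s < l :=
  (isLimitPoint_iff_exists_between.1 h).2 a ha

theorem IsLimitPoint.not_isGreatest (h : IsLimitPoint S l) : ¬IsGreatest (S ∩ Iio l) m := by
  rintro ⟨⟨_, hml⟩, hmax⟩
  obtain ⟨s, hs, hms, hsl⟩ := h.exists_between hml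
  exact hms.not_ge (hmax ⟨hs, hsl⟩)

theorem IsClosedSet.csSup_mem (hS : IsClosedSet S) (hTS : T ⊆ S) (hne : T.Nonempty)
    (hbdd : BddAbove T) : sSup T ∈ S := by
  by_contra hsup
  have hlt : ∀ t ∈ T, t < sSup T := fun t ht =>
    (le_csSup hbdd ht).lt_of_ne fun h => hsup (h ▸ hTS ht)
  refine hsup (hS _ (isLimitPoint_iff_exists_between.2 ⟨?_, fun a ha => ?_⟩))
  · obtain ⟨t, ht⟩ := hne
    exact zero_le.trans_lt (hlt t ht)
  · obtain ⟨t, ht, hat⟩ := exists_lt_of_lt_csSup hne ha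
    exact ⟨t, hTS ht, hat, hlt t ht⟩

theorem IsClosedSet.isLimitPoint_or_exists_isGreatest (hS : IsClosedSet S)
    (hne : (S ∩ Iio l).Nonempty) : IsLimitPoint S l ∨ ∃ m, IsGreatest (S ∩ Iio l) m := by
  have hbdd : BddAbove (S ∩ Iio l) := ⟨l, fun _ hx => hx.2.le⟩
  have hpos : 0 < l := zero_le.trans_lt hne.some_mem.2
  have hle : sSup (S ∩ Iio l) ≤ l := csSup_le' fun _ hx => hx.2.le
  rcases hle.eq_or_lt with heq | hlt
  · exact .inl ⟨hpos, heq⟩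
  · exact .inr ⟨_, ⟨hS.csSup_mem inter_subset_left hne hbdd, hlt⟩, fun _ hx => le_csSup hbdd hx⟩

theorem IsLimitPoint.capsGap_iff (h : IsLimitPoint I β) : CapsGap I B β ↔ ¬IsLimitPoint B β := by
  constructor
  · rintro ⟨γ, _, hγβ, hgap⟩ hB
    obtain ⟨b, hb, hγb, hbβ⟩ := hB.exists_between hγβ
    exact hgap.subset ⟨⟨hγb, hbβ⟩, hb⟩
  · intro hB
    obtain ⟨a, haβ, ha⟩ : ∃ a < β, ∀ b ∈ B, a < b → β ≤ b := by
      simpa [isLimitPoint_iff_exists_between, h.1] using hB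
    obtain ⟨γ, hγI, haγ, hγβ⟩ := h.exists_between haβ
    refine ⟨γ, ⟨hγI, fun hγB => (ha γ hγB haγ).not_gt hγβ⟩, hγβ, ?_⟩
    exact eq_empty_of_forall_notMem fun b hb => (ha b hb.2 (haγ.trans hb.1.1)).not_gt hb.1.2

theorem capsGap_iff_notMem_of_isGreatest (hBI : B ⊆ I) (hm : IsGreatest (I ∩ Iio β) m) :
    CapsGap I B β ↔ m ∉ B := by
  constructor
  · rintro ⟨γ, ⟨hγI, hγB⟩, hγβ, hgap⟩ hmB
    have hγm : γ < m := (hm.2 ⟨hγI, hγβ⟩).lt_of_ne fun h => hγB (h ▸ hmB)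
    exact hgap.subset ⟨⟨hγm, hm.1.2⟩, hmB⟩
  · refine fun hmB => ⟨m, ⟨hm.1.1, hmB⟩, hm.1.2, ?_⟩
    exact eq_empty_of_forall_notMem fun b hb => (hm.2 ⟨hBI hb.2, hb.1.2⟩).not_gt hb.1.1

theorem IsClosedSet.suitable_clauses_iff_capsGap_imp (hI : IsClosedSet I) (hBI : B ⊆ I)
    (p : Prop) :
    ((IsLimitPoint I β → ¬p → IsLimitPoint B β) ∧ ∀ m, IsGreatest (I ∩ Iio β) m → m ∈ B) ↔
      (CapsGap I B β → IsLimitPoint I β ∧ p) := by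
  by_cases hlim : IsLimitPoint I β
  · simp only [hlim.capsGap_iff, hlim, hlim.not_isGreatest, true_and, true_imp_iff,
      false_imp_iff, implies_true, and_true, not_imp_comm]
  · simp only [hlim, false_and, false_imp_iff, true_and, imp_false]
    constructor
    · intro hmem hcap
      have ⟨γ, hγ, hγβ, _⟩ := hcap
      obtain ⟨m, hm⟩ := (hI.isLimitPoint_or_exists_isGreatest ⟨γ, hγ.1, hγβ⟩).resolve_left hlim
      exact (capsGap_iff_notMem_of_isGreatest hBI hm).1 hcap (hmem m hm)
    · intro hcap m hm
      by_contra hmB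
      exact hcap ((capsGap_iff_notMem_of_isGreatest hBI hm).2 hmB)

theorem stmt1_general (hI : IsClosedSet I) (hBI : B ⊆ I) (p : Ordinal → Prop) :
    ((∀ β ∈ B, IsLimitPoint I β → ¬p β → IsLimitPoint B β) ∧
      (∀ β ∈ B, ∀ m, IsGreatest (I ∩ Iio β) m → m ∈ B)) ↔
    (∀ β ∈ B, CapsGap I B β → IsLimitPoint I β ∧ p β) :=
  forall₂_and.symm.trans <| forall₂_congr fun β _ =>
    hI.suitable_clauses_iff_capsGap_imp hBI (p β)

end CapsGap

/-- For a countable closed `B ⊆ I`, clauses (b) and (c) of suitability hold iff every gap of `B`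
is capped by a member of `B` which is a limit point of `I` of uncountable cofinality. -/
theorem stmt1 (I B : Set Ordinal) (hIcl : IsClosedSet I) (hIunb : IsUnboundedSet I)
    (hBI : B ⊆ I) (hcnt : B.Countable) (hBcl : IsClosedSet B) :
    ((∀ β ∈ B, IsLimitPoint I β → β.cof ≤ Cardinal.aleph0 → IsLimitPoint B β) ∧
     (∀ β ∈ B, ∀ m, IsGreatest (I ∩ Iio β) m → m ∈ B)) ↔
    (∀ β ∈ B, (∃ γ ∈ I \ B, γ < β ∧ Ioo γ β ∩ B = ∅) →
      IsLimitPoint I β ∧ Cardinal.aleph0 < β.cof) := by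
  simpa only [CapsGap, not_lt] using stmt1_general hIcl hBI fun β => Cardinal.aleph0 < β.cof
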